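/- arXiv:1807.05054 — 2 statements merged into one kernel-verified Lean document; each statement's English description precedes it below -/
import Mathlib

section
/- Let X be a measurable space, D a probability measure on X, f : X → Bool a measurable target function, and H a finite set of measurable hypotheses h : X → Bool. For any ε with 0 < ε < 1, the probability under the m-fold product measure D^m that there exists h ∈ H with err_D(h) > ε that is nevertheless consistent with f on all m coordinates of the sample is at most |H| · (1 − ε)^m. -/
open MeasureTheory
open scoped ENNReal

section RandomSample

variable {X ι : Type*} [MeasurableSpace X] {μ : Measure X} {ε : ℝ≥0∞}

lemma measure_compl_le_measure_univ_sub {A : Set X} (hA : NullMeasurableSet A μ)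
    (hε : ε ≤ μ A) (hε_top : ε ≠ ∞) : μ Aᶜ ≤ μ Set.univ - ε := by
  refine ENNReal.le_sub_of_add_le_right hε_top ?_
  calc μ Aᶜ + ε ≤ μ Aᶜ + μ A := by gcongr
    _ = μ Set.univ := by rw [add_comm, measure_add_measure_compl₀ hA]

variable [SigmaFinite μ] [Fintype ι]

lemma measure_pi_forall_mem (A : Set X) :
    (Measure.pi fun _ : ι => μ) {s | ∀ i, s i ∈ A} = μ A ^ Fintype.card ι := by
  have h_pi : {s : ι → X | ∀ i, s i ∈ A} = Set.univ.pi fun _ => A := by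
    ext s
    simp only [Set.mem_ofPred_eq, Set.mem_univ_pi]
  rw [h_pi, Measure.pi_pi, Finset.prod_const, Finset.card_univ]

lemma measure_pi_forall_notMem_le {A : Set X} (hA : NullMeasurableSet A μ)
    (hε : ε ≤ μ A) (hε_top : ε ≠ ∞) :
    (Measure.pi fun _ : ι => μ) {s | ∀ i, s i ∉ A} ≤ (μ Set.univ - ε) ^ Fintype.card ι :=
  calc (Measure.pi fun _ : ι => μ) {s | ∀ i, s i ∉ A}
      = μ Aᶜ ^ Fintype.card ι := measure_pi_forall_mem Aᶜ
    _ ≤ (μ Set.univ - ε) ^ Fintype.card ι := by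
      gcongr
      exact measure_compl_le_measure_univ_sub hA hε hε_top

lemma measure_pi_exists_lt_forall_notMem_le {κ : Type*} (J : Finset κ) {A : κ → Set X}
    (hA : ∀ j ∈ J, NullMeasurableSet (A j) μ) :
    (Measure.pi fun _ : ι => μ) {s | ∃ j ∈ J, ε < μ (A j) ∧ ∀ i, s i ∉ A j}
      ≤ J.card * (μ Set.univ - ε) ^ Fintype.card ι := by
  classical
  set large := J.filter fun j => ε < μ (A j) with h_large
  have h_union : {s : ι → X | ∃ j ∈ J, ε < μ (A j) ∧ ∀ i, s i ∉ A j}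
      = ⋃ j ∈ large, {s | ∀ i, s i ∉ A j} := by
    ext s
    simp only [h_large, Set.mem_ofPred_eq, Set.mem_iUnion, Finset.mem_filter, exists_prop,
      and_assoc]
  have h_miss : ∀ j ∈ large, (Measure.pi fun _ : ι => μ) {s | ∀ i, s i ∉ A j}
      ≤ (μ Set.univ - ε) ^ Fintype.card ι := fun j hj =>
    have ⟨hjJ, hεj⟩ := Finset.mem_filter.1 hj
    measure_pi_forall_notMem_le (hA j hjJ) hεj.le hεj.ne_top
  calc (Measure.pi fun _ : ι => μ) {s | ∃ j ∈ J, ε < μ (A j) ∧ ∀ i, s i ∉ A j}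
      ≤ ∑ j ∈ large, (Measure.pi fun _ : ι => μ) {s | ∀ i, s i ∉ A j} := by
        rw [h_union]
        exact measure_biUnion_finset_le large _
    _ ≤ large.card * (μ Set.univ - ε) ^ Fintype.card ι := by
        simpa only [nsmul_eq_mul] using Finset.sum_le_card_nsmul large _ _ h_miss
    _ ≤ J.card * (μ Set.univ - ε) ^ Fintype.card ι := by
        gcongr
        exact Finset.filter_subset _ J

end RandomSample

theorem stmt_1_general {X Y ι : Type*} [MeasurableSpace X] [MeasurableSpace Y] [MeasurableEq Y]
    [Fintype ι] (μ : Measure X) [SigmaFinite μ] {f : X → Y} (hf : AEMeasurable f μ)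
    (H : Finset (X → Y)) (hH : ∀ h ∈ H, AEMeasurable h μ) (ε : ℝ≥0∞) :
    (Measure.pi fun _ : ι => μ)
        {s | ∃ h ∈ H, ε < μ {x | h x ≠ f x} ∧ ∀ i, h (s i) = f (s i)}
      ≤ H.card * (μ Set.univ - ε) ^ Fintype.card ι := by
  have h_disagree : ∀ h ∈ H, NullMeasurableSet {x | h x ≠ f x} μ := fun h hh =>
    (_root_.nullMeasurableSet_eq_fun (hH h hh) hf).compl
  simpa only [Set.mem_ofPred_eq, ne_eq, not_not] using
    measure_pi_exists_lt_forall_notMem_le (ι := ι) (ε := ε) H h_disagree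

/-- Union-bound step of the Simultaneous Occam Theorem: the probability that some
hypothesis in the finite class `H` with error `> ε` is nevertheless consistent with
the target `f` on all `m` sample coordinates is at most `|H| * (1 - ε) ^ m`. -/
theorem stmt_1 {X : Type*} [MeasurableSpace X] (D : Measure X) [IsProbabilityMeasure D]
    (f : X → Bool) (hf : Measurable f)
    (H : Finset (X → Bool)) (hH : ∀ h ∈ H, Measurable h)
    (m : ℕ) (ε : ℝ≥0∞) (hε0 : 0 < ε) (hε1 : ε < 1) :
    (Measure.pi fun _ : Fin m => D)
        {s | ∃ h ∈ H, ε < D {x | h x ≠ f x} ∧ ∀ i, h (s i) = f (s i)}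
      ≤ (H.card : ℝ≥0∞) * (1 - ε) ^ m := by
  simpa only [measure_univ, Fintype.card_fin] using
    stmt_1_general (ι := Fin m) D hf.aemeasurable H (fun h hh => (hH h hh).aemeasurable) ε
end

section
/- Let X be a measurable space, D a probability measure on X, f : X → Bool a measurable target function, H a finite nonempty set of measurable hypotheses h : X → Bool, and let 0 < ε < 1 and 0 < δ ≤ 1. If m ≥ (1/ε) · ln(|H|/δ), then with probability at least 1 − δ under the m-fold product measure D^m, every hypothesis h ∈ H that is consistent with f on all m coordinates of the sample satisfies err_D(h) ≤ ε. -/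
open MeasureTheory
open scoped ENNReal

/-! A hypothesis of error at least `ε` agrees with the target at one random point with probability
at most `1 - ε ≤ exp (-ε)`, hence at `m` independent points with probability at most `exp (-ε m)`.
By the union bound, some such hypothesis is consistent with probability at most
`|H| exp (-ε m)`, and the condition on `m` says exactly that this is at most `δ`. -/

theorem mul_exp_neg_le_of_log_div_le {a b t : ℝ} (hb : 0 < b) (h : Real.log (a / b) ≤ t) :
    a * Real.exp (-t) ≤ b := by
  have hab : a / b ≤ Real.exp t :=
    (Real.le_exp_log _).trans (Real.exp_le_exp.mpr h)
  rw [Real.exp_neg, ← div_eq_mul_inv, div_le_iff₀ (Real.exp_pos t)]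
  exact (div_le_iff₀' hb).mp hab

section Sampling

variable {X ι κ : Type*} [MeasurableSpace X] [Fintype ι] {D : Measure X} [IsProbabilityMeasure D]
  {ε δ : ℝ}

theorem one_sub_le_measureReal_of_compl_le {A : Set X} (hA : D.real Aᶜ ≤ δ) :
    1 - δ ≤ D.real A := by
  have hcover : 1 ≤ D.real A + D.real Aᶜ := by
    simpa only [Set.union_compl_self, probReal_univ] using measureReal_union_le (μ := D) A Aᶜ
  linarith

theorem measureReal_compl_le_exp_neg {A : Set X} (hA : NullMeasurableSet A D)
    (hε : ε ≤ D.real A) : D.real Aᶜ ≤ Real.exp (-ε) :=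
  calc D.real Aᶜ = 1 - D.real A := probReal_compl_eq_one_sub₀ hA
    _ ≤ 1 - ε := by gcongr
    _ ≤ Real.exp (-ε) := Real.one_sub_le_exp_neg ε

theorem measureReal_pi_forall_notMem_le_exp {A : Set X} (hA : NullMeasurableSet A D)
    (hε : ε ≤ D.real A) :
    (Measure.pi fun _ : ι => D).real {s | ∀ i, s i ∉ A} ≤
      Real.exp (-(ε * Fintype.card ι)) := by
  have hpi : {s : ι → X | ∀ i, s i ∉ A} = Set.univ.pi fun _ => Aᶜ := by
    ext s
    simp only [Set.mem_ofPred_eq, Set.mem_univ_pi, Set.mem_compl_iff]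
  calc (Measure.pi fun _ : ι => D).real {s | ∀ i, s i ∉ A}
      = D.real Aᶜ ^ Fintype.card ι := by
        rw [hpi, Measure.real, Measure.pi_pi, Finset.prod_const, ENNReal.toReal_pow,
          Finset.card_univ, Measure.real]
    _ ≤ Real.exp (-ε) ^ Fintype.card ι := by
        gcongr
        exact measureReal_compl_le_exp_neg hA hε
    _ = Real.exp (-(ε * Fintype.card ι)) := by
        rw [← Real.exp_nat_mul, mul_neg, mul_comm]

theorem measureReal_pi_exists_forall_notMem_le {T : Finset κ} {A : κ → Set X}
    (hA : ∀ k ∈ T, NullMeasurableSet (A k) D) (hε : ∀ k ∈ T, ε ≤ D.real (A k)) :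
    (Measure.pi fun _ : ι => D).real {s | ∃ k ∈ T, ∀ i, s i ∉ A k} ≤
      T.card * Real.exp (-(ε * Fintype.card ι)) := by
  have hunion : {s : ι → X | ∃ k ∈ T, ∀ i, s i ∉ A k} = ⋃ k ∈ T, {s | ∀ i, s i ∉ A k} := by
    ext s
    simp only [Set.mem_ofPred_eq, Set.mem_iUnion, exists_prop]
  calc (Measure.pi fun _ : ι => D).real {s | ∃ k ∈ T, ∀ i, s i ∉ A k}
      ≤ ∑ k ∈ T, (Measure.pi fun _ : ι => D).real {s | ∀ i, s i ∉ A k} :=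
        hunion ▸ measureReal_biUnion_finset_le T _
    _ ≤ ∑ _k ∈ T, Real.exp (-(ε * Fintype.card ι)) :=
        Finset.sum_le_sum fun k hk => measureReal_pi_forall_notMem_le_exp (hA k hk) (hε k hk)
    _ = T.card * Real.exp (-(ε * Fintype.card ι)) := by
        rw [Finset.sum_const, nsmul_eq_mul]

theorem one_sub_le_measureReal_pi_forall_notMem_imp_lt {T : Finset κ} {A : κ → Set X}
    (hA : ∀ k ∈ T, NullMeasurableSet (A k) D)
    (hδ : T.card * Real.exp (-(ε * Fintype.card ι)) ≤ δ) :
    1 - δ ≤ (Measure.pi fun _ : ι => D).real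
      {s | ∀ k ∈ T, (∀ i, s i ∉ A k) → D.real (A k) < ε} := by
  classical
  let heavy : Finset κ := {k ∈ T | ε ≤ D.real (A k)}
  have hcompl : {s : ι → X | ∀ k ∈ T, (∀ i, s i ∉ A k) → D.real (A k) < ε}ᶜ =
      {s | ∃ k ∈ heavy, ∀ i, s i ∉ A k} := by
    ext s
    simp only [heavy, Set.mem_compl_iff, Set.mem_ofPred_eq, Finset.mem_filter, not_forall,
      not_lt, exists_prop, and_assoc, and_comm (a := ε ≤ _)]
  refine one_sub_le_measureReal_of_compl_le ?_
  calc (Measure.pi fun _ : ι => D).real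
        {s | ∀ k ∈ T, (∀ i, s i ∉ A k) → D.real (A k) < ε}ᶜ
      ≤ heavy.card * Real.exp (-(ε * Fintype.card ι)) := by
        rw [hcompl]
        exact measureReal_pi_exists_forall_notMem_le
          (fun k hk => hA k (Finset.mem_filter.mp hk).1) (fun k hk => (Finset.mem_filter.mp hk).2)
    _ ≤ T.card * Real.exp (-(ε * Fintype.card ι)) := by
        gcongr
        exact Finset.filter_subset _ _
    _ ≤ δ := hδ

end Sampling

theorem stmt_3_general {X β : Type*} [MeasurableSpace X] (D : Measure X) [IsProbabilityMeasure D]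
    (f : X → β) (H : Finset (X → β)) (hH : ∀ h ∈ H, NullMeasurableSet {x | h x ≠ f x} D)
    (ε δ : ℝ) (hε : 0 < ε) (hδ : 0 < δ)
    (m : ℕ) (hm : (1 / ε) * Real.log ((H.card : ℝ) / δ) ≤ (m : ℝ)) :
    ENNReal.ofReal (1 - δ) ≤
      (Measure.pi fun _ : Fin m => D)
        {s | ∀ h ∈ H, (∀ i, h (s i) = f (s i)) →
          D {x | h x ≠ f x} ≤ ENNReal.ofReal ε} := by
  have hlog : Real.log (H.card / δ) ≤ ε * m := by
    rwa [one_div_mul_eq_div, div_le_iff₀' hε] at hm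
  have hcard : H.card * Real.exp (-(ε * Fintype.card (Fin m))) ≤ δ := by
    simpa only [Fintype.card_fin] using mul_exp_neg_le_of_log_div_le hδ hlog
  refine (ENNReal.ofReal_le_of_le_toReal
    (one_sub_le_measureReal_pi_forall_notMem_imp_lt hH hcard)).trans (measure_mono ?_)
  intro s hs h hh hcons
  have herr : D.real {x | h x ≠ f x} < ε := hs h hh fun i => not_not.mpr (hcons i)
  exact (ENNReal.le_ofReal_iff_toReal_le (measure_ne_top D _) hε.le).mpr herr.le

/-- Part 1 of the Simultaneous Occam Theorem: if `m ≥ (1/ε) * ln (|H| / δ)`, then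
with probability at least `1 - δ` over an `m`-sample from `D`, every hypothesis in
the finite nonempty class `H` that is consistent with the target `f` on all `m`
coordinates has error at most `ε`. -/
theorem stmt_3 {X : Type*} [MeasurableSpace X] (D : Measure X) [IsProbabilityMeasure D]
    (f : X → Bool) (hf : Measurable f)
    (H : Finset (X → Bool)) (hHne : H.Nonempty) (hH : ∀ h ∈ H, Measurable h)
    (ε δ : ℝ) (hε0 : 0 < ε) (hε1 : ε < 1) (hδ0 : 0 < δ) (hδ1 : δ ≤ 1)
    (m : ℕ) (hm : (1 / ε) * Real.log ((H.card : ℝ) / δ) ≤ (m : ℝ)) :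
    ENNReal.ofReal (1 - δ) ≤
      (Measure.pi fun _ : Fin m => D)
        {s | ∀ h ∈ H, (∀ i, h (s i) = f (s i)) →
          D {x | h x ≠ f x} ≤ ENNReal.ofReal ε} :=
  stmt_3_general D f H
    (fun h hh => (measurableSet_eq_fun (hH h hh) hf).compl.nullMeasurableSet)
    ε δ hε0 hδ0 m hm
end
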